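/- Let T be a rooted tree of k nodes and consider a partial assignment of agents produced by the Empty_Node_Selection procedure. Then every empty node of T is within distance 2 (in T) of some node occupied by an agent. -/

import Mathlib

/-- A rooted tree on `k` nodes: node `0` is the root, and every non-root node
has a parent with a smaller index. -/
structure RTree (k : ℕ) where
  parent : Fin k → Fin k
  parent_lt : ∀ i : Fin k, (i : ℕ) ≠ 0 → (parent i : ℕ) < (i : ℕ)
  parent_root : ∀ i : Fin k, (i : ℕ) = 0 → parent i = i

namespace RTree

variable {k : ℕ}

/-- Depth of a node (root has depth 0). -/
def depth (T : RTree k) (i : Fin k) : ℕ :=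
  if h : (i : ℕ) = 0 then 0 else T.depth (T.parent i) + 1
termination_by (i : ℕ)
decreasing_by exact T.parent_lt i h

/-- The children of a node. -/
def children (T : RTree k) (v : Fin k) : Finset (Fin k) :=
  Finset.univ.filter fun c => T.parent c = v ∧ c ≠ v

/-- A leaf is a node with no children. -/
def isLeaf (T : RTree k) (v : Fin k) : Prop := T.children v = ∅

instance (T : RTree k) : DecidablePred T.isLeaf := fun v => by
  unfold isLeaf; infer_instance

/-- The undirected graph underlying the rooted tree. -/
def toGraph (T : RTree k) : SimpleGraph (Fin k) :=
  SimpleGraph.fromRel fun a b => T.parent a = b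

end RTree

namespace RTree

variable {k : ℕ} (T : RTree k)

theorem depth_of_ne_zero {v : Fin k} (hv : (v : ℕ) ≠ 0) :
    T.depth v = T.depth (T.parent v) + 1 := by
  rw [depth, dif_neg hv]

theorem depth_of_eq_zero {v : Fin k} (hv : (v : ℕ) = 0) : T.depth v = 0 := by
  rw [depth, dif_pos hv]

theorem ne_parent {v : Fin k} (hv : (v : ℕ) ≠ 0) : v ≠ T.parent v := fun h =>
  (T.parent_lt v hv).ne (congrArg Fin.val h).symm

theorem not_isLeaf_parent {v : Fin k} (hv : (v : ℕ) ≠ 0) : ¬ T.isLeaf (T.parent v) :=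
  Finset.ne_empty_of_mem (a := v) (by simp [children, T.ne_parent hv])

theorem adj_parent {v : Fin k} (hv : (v : ℕ) ≠ 0) : T.toGraph.Adj v (T.parent v) := by
  simp [toGraph, T.ne_parent hv]

theorem not_isLeaf_root (hk : 2 ≤ k) {v : Fin k} (hv : (v : ℕ) = 0) : ¬ T.isLeaf v := by
  have hlt := T.parent_lt ⟨1, hk⟩ one_ne_zero
  have hpar : T.parent ⟨1, hk⟩ = v := Fin.ext (by simp at hlt; omega)
  exact hpar ▸ T.not_isLeaf_parent one_ne_zero

end RTree

/-- After the Empty_Node_Selection procedure (same hypotheses on the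
occupied set `S` as in its specification), every empty node of the tree is within
graph distance 2 of some occupied node. -/
theorem empty_node_selection_distance_two
    {k : ℕ} (hk : 3 ≤ k) (T : RTree k) (S : Finset (Fin k))
    (h_even_nonleaf : ∀ v, T.depth v % 2 = 0 → ¬ T.isLeaf v → v ∈ S)
    (h_even_leaf_single : ∀ v, T.depth v % 2 = 0 → T.isLeaf v → (v : ℕ) ≠ 0 →
      ((T.children (T.parent v)).filter (fun c => T.isLeaf c)).card ≤ 1 → v ∈ S)
    (h_odd_count : ∀ w, T.depth w % 2 = 0 →
      ((T.children w).filter (fun c => c ∈ S)).card =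
        (if 3 < (T.children w).card then ((T.children w).card - 1) / 3 else 0))
    (h_leaf_group : ∀ w, T.depth w % 2 = 1 →
      1 < ((T.children w).filter (fun c => T.isLeaf c)).card →
      (((T.children w).filter (fun c => T.isLeaf c)).filter (fun c => c ∈ S)).card =
        (((T.children w).filter (fun c => T.isLeaf c)).card + 2) / 3) :
    ∀ v : Fin k, v ∉ S → ∃ u ∈ S, T.toGraph.dist v u ≤ 2 := by
  intro v hv
  have hv0 : (v : ℕ) ≠ 0 := fun h0 =>
    hv (h_even_nonleaf v (by simp [T.depth_of_eq_zero h0]) (T.not_isLeaf_root (by omega) h0))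
  by_cases hp : T.depth (T.parent v) % 2 = 0
  · exact ⟨T.parent v, h_even_nonleaf _ hp (T.not_isLeaf_parent hv0),
      (SimpleGraph.dist_le (T.adj_parent hv0).toWalk).trans (by simp)⟩
  · have hp0 : (T.parent v : ℕ) ≠ 0 := fun h0 => hp (by simp [T.depth_of_eq_zero h0])
    have hpd := T.depth_of_ne_zero hp0
    exact ⟨T.parent (T.parent v),
      h_even_nonleaf _ (by omega) (T.not_isLeaf_parent hp0),
      SimpleGraph.dist_le (.cons (T.adj_parent hv0) (T.adj_parent hp0).toWalk)⟩
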